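/- The threshold policy is β-optimal: suppose the set S = {Δ ≥ 1 : λ + β V_β(1) ≤ β V_β(Δ+1)} is nonempty and let η be its minimum. Then for every Δ₀ ≥ 1, the sensing sequence generated in closed loop by δ_k = 1 if Δ_k ≥ η and δ_k = 0 otherwise (with Δ_{k+1} = 1 if δ_k = 1 and Δ_{k+1} = Δ_k + 1 otherwise) achieves β-discounted cost from Δ₀ exactly equal to V_β(Δ₀). -/

import Mathlib

/-!
Write `V` for the value function. Splitting off the first stage of an arbitrary sensing sequence
(`discCost_succ`) gives the Bellman inequality `U Δ + min (λ + β V 1) (β V (Δ + 1)) ≤ V Δ`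
(`bellman_le`). Since `U` is nondecreasing, so is `V` (`valueFn_mono`); hence every `Δ ≥ η`
satisfies `λ + β V 1 ≤ β V (Δ + 1)`, while `Δ < η` violates it by minimality of `η`. The threshold
action therefore attains the minimum at every age. Iterating the inequality along the closed-loop
trajectory bounds each partial sum of the threshold cost by `V Δ₀`, because the leftover term
`β ^ n V Δₙ` is nonnegative. No finiteness of `V` is needed.
-/

open scoped ENNReal

/-- Age-of-information trajectory from initial age `Δ₀` under sensing sequence `δ`. -/
def aoiTraj (Δ₀ : ℕ) (δ : ℕ → Bool) : ℕ → ℕ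
  | 0 => Δ₀
  | k + 1 => if δ k then 1 else aoiTraj Δ₀ δ k + 1

/-- β-discounted cost of the sensing sequence `δ` from initial age `Δ₀`,
valued in `[0,∞]`. -/
noncomputable def discCost (β lam : ℝ) (U : ℕ → ℝ) (Δ₀ : ℕ) (δ : ℕ → Bool) : ℝ≥0∞ :=
  ∑' k : ℕ, ENNReal.ofReal (β ^ k * (U (aoiTraj Δ₀ δ k) + lam * (if δ k then 1 else 0)))

/-- Discounted value function: infimum of the discounted cost over all sensing
sequences. -/
noncomputable def valueFn (β lam : ℝ) (U : ℕ → ℝ) (Δ₀ : ℕ) : ℝ≥0∞ :=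
  ⨅ δ : ℕ → Bool, discCost β lam U Δ₀ δ

/-- Closed-loop age-of-information trajectory of the threshold-`η` policy
(`sense iff the current age is at least η`) from initial age `Δ₀`. -/
def thTraj (η Δ₀ : ℕ) : ℕ → ℕ
  | 0 => Δ₀
  | k + 1 => if η ≤ thTraj η Δ₀ k then 1 else thTraj η Δ₀ k + 1

/-- The sensing sequence generated in closed loop by the threshold-`η` policy. -/
def thPolicy (η Δ₀ : ℕ) (k : ℕ) : Bool := η ≤ thTraj η Δ₀ k

/-- Splitting off the first stage: the remaining cost is `β` times the cost of the shifted
sensing sequence, started from the age reached after one step. -/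
lemma discCost_succ (β lam : ℝ) (hβ : 0 ≤ β) (U : ℕ → ℝ) (Δ : ℕ) (δ : ℕ → Bool) :
    discCost β lam U Δ δ =
      ENNReal.ofReal (U Δ + lam * (if δ 0 then 1 else 0)) +
        ENNReal.ofReal β *
          discCost β lam U (if δ 0 then 1 else Δ + 1) (fun k => δ (k + 1)) := by
  have hshift : ∀ k, aoiTraj Δ δ (k + 1) =
      aoiTraj (if δ 0 then 1 else Δ + 1) (fun k => δ (k + 1)) k := by
    intro k
    induction k with
    | zero => simp [aoiTraj]
    | succ k ih => rw [aoiTraj, ih]; rfl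
  unfold discCost
  rw [tsum_eq_zero_add' ENNReal.summable, ← ENNReal.tsum_mul_left]
  congr 1
  · simp [aoiTraj]
  · refine tsum_congr fun k => ?_
    rw [hshift, ← ENNReal.ofReal_mul hβ, pow_succ', mul_assoc]

lemma aoiTraj_mono (δ : ℕ → Bool) {a b : ℕ} (hab : a ≤ b) (k : ℕ) :
    aoiTraj a δ k ≤ aoiTraj b δ k := by
  induction k with
  | zero => exact hab
  | succ k ih => simp only [aoiTraj]; split <;> omega

lemma valueFn_mono (β lam : ℝ) (hβ : 0 ≤ β) (U : ℕ → ℝ) (hU : Monotone U) :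
    Monotone (valueFn β lam U) := by
  intro a b hab
  refine iInf_mono fun δ => ENNReal.tsum_le_tsum fun k => ENNReal.ofReal_le_ofReal ?_
  have := hU (aoiTraj_mono δ hab k)
  gcongr

/-- The nontrivial half of the Bellman equation. -/
lemma bellman_le (β lam : ℝ) (hβ : 0 ≤ β) (hlam : 0 ≤ lam) (U : ℕ → ℝ) (hU0 : ∀ n, 0 ≤ U n)
    (Δ : ℕ) :
    ENNReal.ofReal (U Δ) +
      min (ENNReal.ofReal lam + ENNReal.ofReal β * valueFn β lam U 1)
        (ENNReal.ofReal β * valueFn β lam U (Δ + 1)) ≤ valueFn β lam U Δ := by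
  refine le_iInf fun δ => ?_
  rw [discCost_succ β lam hβ]
  have hV : ∀ a, valueFn β lam U a ≤ discCost β lam U a (fun k => δ (k + 1)) :=
    fun a => iInf_le _ _
  by_cases h : δ 0 = true
  · simp only [h, if_true, mul_one]
    rw [ENNReal.ofReal_add (hU0 _) hlam, add_assoc]
    gcongr
    exact (min_le_left _ _).trans (by gcongr; exact hV 1)
  · simp only [h, if_false, mul_zero, add_zero, Bool.false_eq_true]
    gcongr
    exact (min_le_right _ _).trans (by gcongr; exact hV _)

lemma aoiTraj_thPolicy (η Δ₀ k : ℕ) : aoiTraj Δ₀ (thPolicy η Δ₀) k = thTraj η Δ₀ k := by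
  induction k with
  | zero => rfl
  | succ k ih => simp [aoiTraj, thTraj, thPolicy, ih]

lemma one_le_thTraj (η Δ₀ : ℕ) (h : 1 ≤ Δ₀) (k : ℕ) : 1 ≤ thTraj η Δ₀ k := by
  cases k with
  | zero => exact h
  | succ k => simp only [thTraj]; split <;> omega

theorem threshold_policy_beta_optimal
    (β lam : ℝ) (hβ : β ∈ Set.Ioo (0 : ℝ) 1) (hlam : 0 ≤ lam)
    (U : ℕ → ℝ) (hU0 : ∀ n, 0 ≤ U n) (hUmono : Monotone U)
    (η : ℕ) (hη : 1 ≤ η)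
    (hηS : ENNReal.ofReal lam + ENNReal.ofReal β * valueFn β lam U 1 ≤
      ENNReal.ofReal β * valueFn β lam U (η + 1))
    (hηmin : ∀ Δ : ℕ, 1 ≤ Δ →
      ENNReal.ofReal lam + ENNReal.ofReal β * valueFn β lam U 1 ≤
        ENNReal.ofReal β * valueFn β lam U (Δ + 1) → η ≤ Δ)
    (Δ₀ : ℕ) (hΔ₀ : 1 ≤ Δ₀) :
    discCost β lam U Δ₀ (thPolicy η Δ₀) = valueFn β lam U Δ₀ := by
  have hβ0 : 0 ≤ β := hβ.1.le
  -- At every age the threshold action attains the minimum in the Bellman inequality.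
  have hstep : ∀ Δ, 1 ≤ Δ →
      ENNReal.ofReal (U Δ + lam * (if η ≤ Δ then 1 else 0)) +
        ENNReal.ofReal β * valueFn β lam U (if η ≤ Δ then 1 else Δ + 1) ≤
          valueFn β lam U Δ := by
    intro Δ hΔ
    refine le_trans ?_ (bellman_le β lam hβ0 hlam U hU0 Δ)
    by_cases h : η ≤ Δ
    · have hle : ENNReal.ofReal lam + ENNReal.ofReal β * valueFn β lam U 1 ≤
          ENNReal.ofReal β * valueFn β lam U (Δ + 1) :=
        hηS.trans (by gcongr; exact valueFn_mono β lam hβ0 U hUmono (by omega))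
      rw [min_eq_left hle]
      simp only [h, if_true, mul_one]
      rw [ENNReal.ofReal_add (hU0 _) hlam, add_assoc]
    · have hle := (not_le.mp fun hS => h (hηmin Δ hΔ hS)).le
      rw [min_eq_right hle]
      simp [h]
  -- The cost of the first `n` stages plus the discounted value of the age reached.
  have hpartial : ∀ n, ∑ k ∈ Finset.range n, ENNReal.ofReal (β ^ k *
        (U (aoiTraj Δ₀ (thPolicy η Δ₀) k) + lam * (if thPolicy η Δ₀ k then 1 else 0))) +
      ENNReal.ofReal (β ^ n) * valueFn β lam U (thTraj η Δ₀ n) ≤ valueFn β lam U Δ₀ := by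
    intro n
    induction n with
    | zero => simp [thTraj]
    | succ n ih =>
      refine le_trans ?_ ih
      rw [Finset.sum_range_succ, add_assoc]
      gcongr
      have h := hstep _ (one_le_thTraj η Δ₀ hΔ₀ n)
      calc _ = ENNReal.ofReal (β ^ n) * _ := ?_
        _ ≤ _ := mul_le_mul_right h _
      rw [mul_add (ENNReal.ofReal _), ← mul_assoc (ENNReal.ofReal _),
        ← ENNReal.ofReal_mul (by positivity), ← ENNReal.ofReal_mul (by positivity),
        ← pow_succ, aoiTraj_thPolicy]
      simp [thPolicy, thTraj]
  refine le_antisymm ?_ (iInf_le _ _)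
  unfold discCost
  rw [ENNReal.tsum_eq_iSup_nat]
  exact iSup_le fun n => le_self_add.trans (hpartial n)
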